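/- The geometrically defined operators on the localized equivariant cohomology of the SL(2) quasi-map spaces satisfy the sl(2) relations: let V be the k-vector space with basis (u_d)_{d ∈ ℕ}, with symmetric bilinear form ⟨u_d, u_{d'}⟩ = 0 for d ≠ d' and ⟨u_d, u_d⟩ = (-1)^d · A_d. Define F(u_d) = (1/ℏ)·u_{d-1} (with F(u_0) = 0), H(u_d) = (a/ℏ + 2d + 1)·u_d, and E(u_d) = -(d+1)·(a + (d+1)ℏ)·u_{d+1}. Then (i) E is adjoint to F, i.e. ⟨E(v), w⟩ = ⟨v, F(w)⟩ for all v, w ∈ V; and (ii) the commutator relations E∘F - F∘E = H, H∘E - E∘H = 2·E, and H∘F - F∘H = -2·F hold, so (E, H, F) defines an sl(2)-action on V. -/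

import Mathlib

/-!
On the weight basis `E` and `F` are ladder operators with coefficients `α d` and `β d`, so `E ∘ F`
and `F ∘ E` are diagonal and all three commutator relations reduce to scalar identities. Here
`α d * β d = -(d + 1) * (a + (d + 1) * ℏ) / ℏ` is quadratic in `d`, and its successive differences
are, up to sign, the weights of `H`. Adjointness amounts to the recursion
`A (d + 1) = A d / ((d + 1) * ℏ * (a + (d + 1) * ℏ))`.
-/

open Module

theorem comp_sub_comp_eq_smul_of_weight_shift {ι R M : Type*} [CommRing R] [AddCommGroup M]
    [Module R M] (b : Basis ι R M) {H T : M →ₗ[R] M} {η : ι → R} {c : R}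
    (hH : ∀ i, H (b i) = η i • b i) (hHT : ∀ i, H (T (b i)) = (η i + c) • T (b i)) :
    H ∘ₗ T - T ∘ₗ H = c • T :=
  b.ext fun i ↦ by
    simp only [LinearMap.sub_apply, LinearMap.comp_apply, LinearMap.smul_apply, hH, hHT, map_smul,
      add_smul, add_sub_cancel_left]

/-- `E` and `F` are the raising and lowering operators of a ladder on the basis `b`. The
coefficient `β d` belongs to the step from `b (d + 1)` down to `b d`, so that `α d` and `β d` label
the same rung. -/
structure IsLadderPair {R M : Type*} [CommSemiring R] [AddCommMonoid M] [Module R M]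
    (b : Basis ℕ R M) (α β : ℕ → R) (E F : M →ₗ[R] M) : Prop where
  raise (d : ℕ) : E (b d) = α d • b (d + 1)
  lower_zero : F (b 0) = 0
  lower_succ (d : ℕ) : F (b (d + 1)) = β d • b d

namespace IsLadderPair

section Adjoint

variable {R M : Type*} [CommSemiring R] [AddCommMonoid M] [Module R M] {b : Basis ℕ R M}
  {α β : ℕ → R} {E F : M →ₗ[R] M}

theorem isAdjointPair (hEF : IsLadderPair b α β E F) {P : M →ₗ[R] M →ₗ[R] R}
    (hP : P.IsOrthoᵢ b)
    (hnorm : ∀ d, α d * P (b (d + 1)) (b (d + 1)) = β d * P (b d) (b d)) :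
    P.IsAdjointPair P E F := by
  rw [LinearMap.isAdjointPair_iff_comp_eq_compl₂]
  refine LinearMap.ext_basis b b fun d e ↦ ?_
  simp only [LinearMap.comp_apply, LinearMap.compl₂_apply, hEF.raise, map_smul,
    LinearMap.smul_apply, smul_eq_mul]
  cases e with
  | zero => rw [hP d.succ_ne_zero, hEF.lower_zero, map_zero, mul_zero]
  | succ e =>
    rw [hEF.lower_succ, map_smul, smul_eq_mul]
    obtain rfl | hde := eq_or_ne d e
    · exact hnorm d
    · rw [hP (Nat.succ_injective.ne hde), hP hde, mul_zero, mul_zero]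

end Adjoint

section Commutator

variable {R M : Type*} [CommRing R] [AddCommGroup M] [Module R M] {b : Basis ℕ R M}
  {α β η : ℕ → R} {c : R} {E F H : M →ₗ[R] M}

theorem raise_comp_lower_sub_lower_comp_raise (hEF : IsLadderPair b α β E F)
    (hH : ∀ d, H (b d) = η d • b d) (hη_zero : η 0 = -(α 0 * β 0))
    (hη_succ : ∀ d, η (d + 1) = α d * β d - α (d + 1) * β (d + 1)) :
    E ∘ₗ F - F ∘ₗ E = H := by
  have lower_raise (d : ℕ) : F (E (b d)) = (α d * β d) • b d := by
    rw [hEF.raise, map_smul, hEF.lower_succ, smul_smul]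
  refine b.ext fun d ↦ ?_
  rw [LinearMap.sub_apply, LinearMap.comp_apply, LinearMap.comp_apply, lower_raise, hH]
  cases d with
  | zero => rw [hEF.lower_zero, map_zero, zero_sub, hη_zero, neg_smul]
  | succ d =>
    rw [hEF.lower_succ, map_smul, hEF.raise, smul_smul, mul_comm (β d), ← sub_smul, hη_succ]

theorem weight_comp_raise_sub_raise_comp_weight (hEF : IsLadderPair b α β E F)
    (hH : ∀ d, H (b d) = η d • b d) (hη : ∀ d, η (d + 1) = η d + c) :
    H ∘ₗ E - E ∘ₗ H = c • E :=
  comp_sub_comp_eq_smul_of_weight_shift b hH fun d ↦ by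
    rw [hEF.raise, map_smul, hH, hη, smul_comm]

theorem weight_comp_lower_sub_lower_comp_weight (hEF : IsLadderPair b α β E F)
    (hH : ∀ d, H (b d) = η d • b d) (hη : ∀ d, η (d + 1) = η d + c) :
    H ∘ₗ F - F ∘ₗ H = -c • F := by
  refine comp_sub_comp_eq_smul_of_weight_shift b hH fun d ↦ ?_
  cases d with
  | zero => rw [hEF.lower_zero, map_zero, smul_zero]
  | succ d => rw [hEF.lower_succ, map_smul, hH, hη, add_neg_cancel_right, smul_comm]

end Commutator

end IsLadderPair

section PartitionCoeff

variable {k : Type*} [Field k]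

/-- The degree-`d` coefficient `A_d` of the partition function `Z_{SL(2),B}`, with the product over
`1 ≤ i ≤ d` reindexed to start at `0`. -/
def sl2PartitionCoeff (hbar a : k) (d : ℕ) : k :=
  1 / ((Nat.factorial d : k) * hbar ^ d * ∏ i ∈ Finset.range d, (a + ((i : k) + 1) * hbar))

theorem sl2PartitionCoeff_succ (hbar a : k) (d : ℕ) :
    sl2PartitionCoeff hbar a (d + 1) =
      sl2PartitionCoeff hbar a d / (((d : k) + 1) * hbar * (a + ((d : k) + 1) * hbar)) := by
  rw [sl2PartitionCoeff, sl2PartitionCoeff, Finset.prod_range_succ, Nat.factorial_succ,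
    div_div, pow_succ]
  push_cast
  ring

theorem mul_sl2PartitionCoeff_succ {hbar a : k} {d : ℕ} (hd : (d : k) + 1 ≠ 0)
    (ha : a + ((d : k) + 1) * hbar ≠ 0) :
    ((d : k) + 1) * (a + ((d : k) + 1) * hbar) * sl2PartitionCoeff hbar a (d + 1) =
      hbar⁻¹ * sl2PartitionCoeff hbar a d := by
  rw [sl2PartitionCoeff_succ]
  field_simp

end PartitionCoeff

/-- The geometrically defined operators on the localized
equivariant cohomology of the SL(2) quasi-map spaces satisfy the sl(2)
relations: on `V = ℕ →₀ k` with basis `u_d = single d 1`, signed Poincaré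
pairing `⟨u_d, u_d⟩ = (-1)^d · A_d`, and operators
`F(u_d) = (1/ℏ)·u_{d-1}` (with `F(u_0) = 0`), `H(u_d) = (a/ℏ + 2d + 1)·u_d`,
`E(u_d) = -(d+1)·(a + (d+1)ℏ)·u_{d+1}`, the operator `E` is adjoint to `F` and
`[E,F] = H`, `[H,E] = 2E`, `[H,F] = -2F`. -/
theorem sl2_action_on_quasimap_cohomology {k : Type*} [Field k] [CharZero k]
    (hbar a : k) (hhbar : hbar ≠ 0)
    (ha : ∀ i : ℕ, 1 ≤ i → a + (i : k) * hbar ≠ 0)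
    (A : ℕ → k)
    (hA : ∀ d : ℕ, A d = 1 / ((Nat.factorial d : k) * hbar ^ d *
      ∏ i ∈ Finset.range d, (a + ((i : k) + 1) * hbar)))
    (P : (ℕ →₀ k) →ₗ[k] (ℕ →₀ k) →ₗ[k] k)
    (hP : ∀ d d' : ℕ, P (Finsupp.single d 1) (Finsupp.single d' 1) =
      if d = d' then (-1 : k) ^ d * A d else 0)
    (E H F : (ℕ →₀ k) →ₗ[k] (ℕ →₀ k))
    (hF : ∀ d : ℕ, F (Finsupp.single d 1) =
      if d = 0 then 0 else hbar⁻¹ • Finsupp.single (d - 1) 1)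
    (hH : ∀ d : ℕ, H (Finsupp.single d 1) =
      (a / hbar + 2 * (d : k) + 1) • Finsupp.single d 1)
    (hE : ∀ d : ℕ, E (Finsupp.single d 1) =
      (-(((d : k) + 1) * (a + ((d : k) + 1) * hbar))) • Finsupp.single (d + 1) 1) :
    (∀ v w : ℕ →₀ k, P (E v) w = P v (F w)) ∧
    E ∘ₗ F - F ∘ₗ E = H ∧
    H ∘ₗ E - E ∘ₗ H = (2 : k) • E ∧
    H ∘ₗ F - F ∘ₗ H = (-2 : k) • F := by
  obtain rfl : A = sl2PartitionCoeff hbar a := funext hA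
  let b : Basis ℕ k (ℕ →₀ k) := Finsupp.basisSingleOne
  have hb (d : ℕ) : b d = Finsupp.single d 1 := congrFun Finsupp.coe_basisSingleOne d
  simp only [← hb] at hP hF hH hE
  have hEF : IsLadderPair b _ (fun _ ↦ hbar⁻¹) E F :=
    ⟨hE, by simpa using hF 0, fun d ↦ by simpa using hF (d + 1)⟩
  have hweight (d : ℕ) :
      a / hbar + 2 * ((d + 1 : ℕ) : k) + 1 = a / hbar + 2 * (d : k) + 1 + 2 := by
    push_cast
    ring
  refine ⟨hEF.isAdjointPair (fun d e hde ↦ (hP d e).trans (if_neg hde)) fun d ↦ ?_,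
    hEF.raise_comp_lower_sub_lower_comp_raise hH ?_ fun d ↦ ?_,
    hEF.weight_comp_raise_sub_raise_comp_weight hH hweight,
    hEF.weight_comp_lower_sub_lower_comp_weight hH hweight⟩
  · have hnorm := mul_sl2PartitionCoeff_succ (Nat.cast_add_one_ne_zero d)
      (mod_cast ha (d + 1) d.succ_pos)
    rw [hP, hP, if_pos rfl, if_pos rfl]
    linear_combination (-1 : k) ^ d * hnorm
  · push_cast
    field_simp
    ring
  · push_cast
    field_simp
    ring
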